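/- Let b ∈ L², let t ≥ 0, and let (b_n) and (c_n) be two sequences of simple processes in H² such that ∫₀ᵗ (b − b_n)² ds → 0 and ∫₀ᵗ (b − c_n)² ds → 0 in probability. If the elementary stochastic integrals of b_n up to time t converge in probability to a random variable X, and the elementary stochastic integrals of c_n up to time t converge in probability to a random variable Y, then X = Y with probability one; in other words, the probability limit of the elementary integrals is independent of the approximating sequence. -/

import Mathlib

/-!
The difference of `bs k` and `cs k` is again a simple process, on a common refinement of the two
grids, and `∫ (bs k - cs k)² → 0` in probability. The elementary integral is continuous at `0` for
this convergence because of the inequality `P(|∫ b dW| ≥ ε) ≤ P(∫ b² > δ) + δ / ε²`: switching the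
coefficients off as soon as the accumulated `∫ b²` is about to exceed `δ` keeps them adapted, and
the Itô isometry and Chebyshev's inequality bound the truncated integral, which differs from the
original one only where `∫ b² > δ`.
-/

open MeasureTheory Filter Set

variable {Ω : Type*} {mΩ : MeasurableSpace Ω}

/-- The filtration is augmented: each `F t` contains all `P`-null sets. -/
def AugmentedFiltration (P : Measure Ω) (F : Filtration ℝ mΩ) : Prop :=
  ∀ t : ℝ, ∀ s : Set Ω, MeasurableSet s → P s = 0 → MeasurableSet[F t] s

/-- `W` is a standard Wiener process with respect to the filtration `F` under `P`. -/
def IsWienerProcess (P : Measure Ω) (F : Filtration ℝ mΩ) (W : ℝ → Ω → ℝ) : Prop :=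
  (∀ ω, Continuous fun t => W t ω) ∧
  (∀ ω, W 0 ω = 0) ∧
  Adapted F W ∧
  ∀ s t : ℝ, 0 ≤ s → s ≤ t →
    ProbabilityTheory.Indep
      (MeasurableSpace.comap (fun ω => W t ω - W s ω) inferInstance) (F s) P ∧
    Measure.map (fun ω => W t ω - W s ω) P
      = ProbabilityTheory.gaussianReal 0 (Real.toNNReal (t - s))

/-- `b` is a simple process with grid `0 = t 0 < t 1 < ⋯ < t n`. -/
def IsSimpleWith (F : Filtration ℝ mΩ) (b : ℝ → Ω → ℝ) (n : ℕ) (t : ℕ → ℝ) : Prop :=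
  t 0 = 0 ∧ (∀ i < n, t i < t (i + 1)) ∧
  Measurable[F 0] (b 0) ∧
  (∀ i < n, Measurable[F (t i)] (b (t (i + 1)))) ∧
  ∀ s ω, b s ω =
    Set.indicator ({0} : Set ℝ) (fun _ => b 0 ω) s +
      ∑ i ∈ Finset.range n,
        Set.indicator (Set.Ioc (t i) (t (i + 1))) (fun _ => b (t (i + 1)) ω) s

/-- `b ∈ L²`: measurable, adapted, and pathwise locally square integrable a.s. -/
def MemL2 (P : Measure Ω) (F : Filtration ℝ mΩ) (b : ℝ → Ω → ℝ) : Prop :=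
  Measurable (Function.uncurry b) ∧ Adapted F b ∧
  ∀ t : ℝ, 0 ≤ t →
    ∀ᵐ ω ∂P, (∫⁻ s in Set.Ioc (0 : ℝ) t, ENNReal.ofReal ((b s ω) ^ 2)) < ⊤

/-- `b ∈ H²`: measurable, adapted, locally square integrable in expectation. -/
def MemH2 (P : Measure Ω) (F : Filtration ℝ mΩ) (b : ℝ → Ω → ℝ) : Prop :=
  Measurable (Function.uncurry b) ∧ Adapted F b ∧
  ∀ t : ℝ, 0 ≤ t →
    (∫⁻ ω, ∫⁻ s in Set.Ioc (0 : ℝ) t, ENNReal.ofReal ((b s ω) ^ 2) ∂volume ∂P) < ⊤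

/-- Elementary stochastic integral `∑ b(tᵢ)(W(tᵢ) − W(tᵢ₋₁))` of a simple process. -/
def ElemInt (W : ℝ → Ω → ℝ) (b : ℝ → Ω → ℝ) (n : ℕ) (t : ℕ → ℝ) (ω : Ω) : ℝ :=
  ∑ i ∈ Finset.range n, b (t (i + 1)) ω * (W (t (i + 1)) ω - W (t i) ω)

open ProbabilityTheory
open scoped Topology

/-! ### Transforms of independent noise in discrete time -/

/-- Centred square-integrable noise `D` with variances `v`, adapted to the filtration `𝓖` and
independent of the past: the law of the increments of a Wiener process along a grid. The increment
`D j` is revealed at time `j + 1`. -/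
structure IsIndepNoise (P : Measure Ω) (𝓖 : Filtration ℕ mΩ) (D : ℕ → Ω → ℝ) (v : ℕ → ℝ) :
    Prop where
  measurable : ∀ j, Measurable[𝓖 (j + 1)] (D j)
  memLp_two : ∀ j, MemLp (D j) 2 P
  integral_eq_zero : ∀ j, ∫ ω, D j ω ∂P = 0
  integral_sq : ∀ j, ∫ ω, D j ω ^ 2 ∂P = v j
  indep : ∀ j, Indep (MeasurableSpace.comap (D j) inferInstance) (𝓖 j) P

/-- The martingale transform `M n = ∑_{j < n} e j * D j` of the increments `D`. -/
def martingaleTransform (e D : ℕ → Ω → ℝ) (n : ℕ) (ω : Ω) : ℝ :=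
  ∑ j ∈ Finset.range n, e j ω * D j ω

/-- The predictable quadratic variation `⟨M⟩ n = ∑_{j < n} (e j)² * v j` of the martingale transform
of increments of variances `v`. -/
def predictableVariation (e : ℕ → Ω → ℝ) (v : ℕ → ℝ) (n : ℕ) (ω : Ω) : ℝ :=
  ∑ j ∈ Finset.range n, e j ω ^ 2 * v j

/-- The coefficients `e`, switched off at the first index `j` for which `⟨M⟩ (j + 1) > δ`. As
`⟨M⟩ (j + 1)` is known at time `j`, this does not look into the future. -/
noncomputable def cutoff (e : ℕ → Ω → ℝ) (v : ℕ → ℝ) (δ : ℝ) (j : ℕ) (ω : Ω) : ℝ :=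
  if predictableVariation e v (j + 1) ω ≤ δ then e j ω else 0

section Transform

variable {P : Measure Ω} {𝓖 : Filtration ℕ mΩ} {e D : ℕ → Ω → ℝ} {v : ℕ → ℝ} {δ ε : ℝ}

lemma predictableVariation_mono (hv : ∀ j, 0 ≤ v j) (ω : Ω) :
    Monotone fun n => predictableVariation e v n ω :=
  fun _ _ hmn => Finset.sum_le_sum_of_subset_of_nonneg (Finset.range_mono hmn)
    fun j _ _ => mul_nonneg (sq_nonneg _) (hv j)

lemma measurable_predictableVariation_succ (he : ∀ j, Measurable[𝓖 j] (e j)) (n : ℕ) :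
    Measurable[𝓖 n] (predictableVariation e v (n + 1)) :=
  Finset.measurable_sum _ fun j hj =>
    (((he j).mono (𝓖.mono (Finset.mem_range_succ_iff.1 hj)) le_rfl).pow_const 2).mul_const _

lemma measurable_cutoff (he : ∀ j, Measurable[𝓖 j] (e j)) (j : ℕ) :
    Measurable[𝓖 j] (cutoff e v δ j) :=
  Measurable.ite (measurable_predictableVariation_succ he j measurableSet_Iic) (he j)
    measurable_const

lemma predictableVariation_cutoff_le (hv : ∀ j, 0 ≤ v j) (hδ : 0 ≤ δ) (n : ℕ) (ω : Ω) :
    predictableVariation (cutoff e v δ) v n ω ≤ δ := by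
  induction n with
  | zero => simpa [predictableVariation] using hδ
  | succ n ih =>
    by_cases hn : predictableVariation e v (n + 1) ω ≤ δ
    · refine (Finset.sum_le_sum fun j _ => mul_le_mul_of_nonneg_right ?_ (hv j)).trans hn
      unfold cutoff
      split_ifs
      · exact le_rfl
      · simpa using sq_nonneg (e j ω)
    · have hcut : cutoff e v δ n ω = 0 := if_neg hn
      simpa [predictableVariation, Finset.sum_range_succ, hcut] using ih

lemma abs_cutoff_le (hv : ∀ j, 0 < v j) (hδ : 0 ≤ δ) (j : ℕ) (ω : Ω) :
    |cutoff e v δ j ω| ≤ √(δ / v j) := by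
  refine Real.abs_le_sqrt ((le_div_iff₀ (hv j)).2 ?_)
  exact (Finset.single_le_sum (f := fun i => cutoff e v δ i ω ^ 2 * v i)
    (fun i _ => mul_nonneg (sq_nonneg _) (hv i).le) (Finset.self_mem_range_succ j)).trans
    (predictableVariation_cutoff_le (fun i => (hv i).le) hδ (j + 1) ω)

lemma memLp_cutoff [IsFiniteMeasure P] (he : ∀ j, Measurable[𝓖 j] (e j)) (hv : ∀ j, 0 < v j)
    (hδ : 0 ≤ δ) (p : ENNReal) (j : ℕ) : MemLp (cutoff e v δ j) p P :=
  MemLp.of_bound ((measurable_cutoff he j).mono (𝓖.le j) le_rfl).aestronglyMeasurable _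
    (ae_of_all _ (abs_cutoff_le hv hδ j))

lemma martingaleTransform_cutoff (hv : ∀ j, 0 ≤ v j) {n : ℕ} {ω : Ω}
    (hδ : predictableVariation e v n ω ≤ δ) :
    martingaleTransform (cutoff e v δ) D n ω = martingaleTransform e D n ω := by
  refine Finset.sum_congr rfl fun j hj => ?_
  have hj' : predictableVariation e v (j + 1) ω ≤ δ :=
    (predictableVariation_mono hv ω (Finset.mem_range.1 hj)).trans hδ
  rw [cutoff, if_pos hj']

namespace IsIndepNoise

lemma indepFun (hD : IsIndepNoise P 𝓖 D v) {j : ℕ} {Z : Ω → ℝ} (hZ : Measurable[𝓖 j] Z) :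
    IndepFun Z (D j) P := by
  rw [IndepFun_iff_Indep]
  exact indep_of_indep_of_le_left (hD.indep j).symm hZ.comap_le

lemma indepFun_sq (hD : IsIndepNoise P 𝓖 D v) {j : ℕ} {Z : Ω → ℝ} (hZ : Measurable[𝓖 j] Z) :
    IndepFun (fun ω => Z ω ^ 2) (fun ω => D j ω ^ 2) P :=
  (hD.indepFun hZ).comp (measurable_id.pow_const 2) (measurable_id.pow_const 2)

lemma memLp_two_mul (hD : IsIndepNoise P 𝓖 D v) {j : ℕ} {Z : Ω → ℝ} (hZ : Measurable[𝓖 j] Z)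
    (hZ2 : MemLp Z 2 P) : MemLp (fun ω => Z ω * D j ω) 2 P := by
  refine (memLp_two_iff_integrable_sq (f := fun ω => Z ω * D j ω)
    (hZ2.1.mul (hD.memLp_two j).1)).2 ?_
  simpa only [mul_pow, Pi.mul_def] using
    (hD.indepFun_sq hZ).integrable_mul hZ2.integrable_sq (hD.memLp_two j).integrable_sq

lemma integral_mul (hD : IsIndepNoise P 𝓖 D v) {j : ℕ} {Z : Ω → ℝ} (hZ : Measurable[𝓖 j] Z) :
    ∫ ω, Z ω * D j ω ∂P = 0 := by
  rw [(hD.indepFun hZ).integral_fun_mul_eq_mul_integral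
    (hZ.mono (𝓖.le j) le_rfl).aestronglyMeasurable (hD.memLp_two j).1, hD.integral_eq_zero,
    mul_zero]

lemma integral_mul_sq (hD : IsIndepNoise P 𝓖 D v) {j : ℕ} {Z : Ω → ℝ} (hZ : Measurable[𝓖 j] Z) :
    ∫ ω, (Z ω * D j ω) ^ 2 ∂P = ∫ ω, Z ω ^ 2 * v j ∂P := by
  simp only [mul_pow]
  rw [(hD.indepFun_sq hZ).integral_fun_mul_eq_mul_integral
    ((hZ.mono (𝓖.le j) le_rfl).pow_const 2).aestronglyMeasurable ((hD.memLp_two j).1.pow 2),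
    hD.integral_sq, integral_mul_const]

lemma measurable_martingaleTransform (hD : IsIndepNoise P 𝓖 D v)
    (he : ∀ j, Measurable[𝓖 j] (e j)) (n : ℕ) : Measurable[𝓖 n] (martingaleTransform e D n) :=
  Finset.measurable_sum _ fun j hj =>
    ((he j).mono (𝓖.mono (Finset.mem_range.1 hj).le) le_rfl).mul
      ((hD.measurable j).mono (𝓖.mono (Finset.mem_range.1 hj)) le_rfl)

lemma memLp_two_martingaleTransform (hD : IsIndepNoise P 𝓖 D v)
    (he : ∀ j, Measurable[𝓖 j] (e j)) (he2 : ∀ j, MemLp (e j) 2 P) (n : ℕ) :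
    MemLp (martingaleTransform e D n) 2 P :=
  memLp_finsetSum _ fun j _ => hD.memLp_two_mul (he j) (he2 j)

theorem integral_martingaleTransform_sq (hD : IsIndepNoise P 𝓖 D v)
    (he : ∀ j, Measurable[𝓖 j] (e j)) (he2 : ∀ j, MemLp (e j) 2 P) (n : ℕ) :
    ∫ ω, martingaleTransform e D n ω ^ 2 ∂P = ∫ ω, predictableVariation e v n ω ∂P := by
  induction n with
  | zero => simp [martingaleTransform, predictableVariation]
  | succ n ih =>
    have hM := hD.memLp_two_martingaleTransform he he2 n
    have hMe : Measurable[𝓖 n] fun ω => martingaleTransform e D n ω * e n ω :=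
      (hD.measurable_martingaleTransform he n).mul (he n)
    have hcross : Integrable (fun ω => 2 * (martingaleTransform e D n ω * e n ω * D n ω)) P := by
      simpa only [mul_assoc, Pi.mul_apply] using
        (hM.integrable_mul (hD.memLp_two_mul (he n) (he2 n))).const_mul 2
    have hsq : ∀ j, Integrable (fun ω => e j ω ^ 2 * v j) P :=
      fun j => (he2 j).integrable_sq.mul_const _
    calc ∫ ω, martingaleTransform e D (n + 1) ω ^ 2 ∂P
        = ∫ ω, (martingaleTransform e D n ω ^ 2
            + 2 * (martingaleTransform e D n ω * e n ω * D n ω) + (e n ω * D n ω) ^ 2) ∂P := by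
          simp only [martingaleTransform, Finset.sum_range_succ]
          congr 1 with ω
          ring
      _ = ∫ ω, martingaleTransform e D n ω ^ 2 ∂P
            + 2 * ∫ ω, martingaleTransform e D n ω * e n ω * D n ω ∂P
            + ∫ ω, (e n ω * D n ω) ^ 2 ∂P := by
          rw [integral_add (f := fun ω => martingaleTransform e D n ω ^ 2
              + 2 * (martingaleTransform e D n ω * e n ω * D n ω)) (hM.integrable_sq.add hcross)
            (hD.memLp_two_mul (he n) (he2 n)).integrable_sq,
            integral_add hM.integrable_sq hcross, integral_const_mul]
      _ = ∫ ω, predictableVariation e v n ω ∂P + ∫ ω, e n ω ^ 2 * v n ∂P := by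
          rw [ih, hD.integral_mul hMe, hD.integral_mul_sq (he n), mul_zero, add_zero]
      _ = ∫ ω, predictableVariation e v (n + 1) ω ∂P := by
          simp only [predictableVariation, Finset.sum_range_succ]
          rw [integral_add (integrable_finsetSum _ fun j _ => hsq j) (hsq n)]

lemma measureReal_le_abs_martingaleTransform_cutoff [IsProbabilityMeasure P]
    (hD : IsIndepNoise P 𝓖 D v) (hv : ∀ j, 0 < v j) (he : ∀ j, Measurable[𝓖 j] (e j))
    (hδ : 0 ≤ δ) (hε : 0 < ε) (n : ℕ) :
    P.real {ω | ε ≤ |martingaleTransform (cutoff e v δ) D n ω|} ≤ δ / ε ^ 2 := by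
  have he' : ∀ j, Measurable[𝓖 j] (cutoff e v δ j) := measurable_cutoff he
  have he2 : ∀ j, MemLp (cutoff e v δ j) 2 P := memLp_cutoff he hv hδ 2
  rw [le_div_iff₀' (by positivity)]
  calc ε ^ 2 * P.real {ω | ε ≤ |martingaleTransform (cutoff e v δ) D n ω|}
      = ε ^ 2 * P.real {ω | ε ^ 2 ≤ martingaleTransform (cutoff e v δ) D n ω ^ 2} := by
        simp only [sq_le_sq, abs_of_pos hε]
    _ ≤ ∫ ω, martingaleTransform (cutoff e v δ) D n ω ^ 2 ∂P :=
        mul_meas_ge_le_integral_of_nonneg (ae_of_all _ fun _ => sq_nonneg _)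
          (hD.memLp_two_martingaleTransform he' he2 n).integrable_sq _
    _ = ∫ ω, predictableVariation (cutoff e v δ) v n ω ∂P :=
        hD.integral_martingaleTransform_sq he' he2 n
    _ ≤ ∫ _, δ ∂P :=
        integral_mono_of_nonneg
          (ae_of_all _ fun ω => Finset.sum_nonneg fun j _ => mul_nonneg (sq_nonneg _) (hv j).le)
          (integrable_const δ)
          (ae_of_all _ (predictableVariation_cutoff_le (fun j => (hv j).le) hδ n))
    _ = δ := by simp

theorem measureReal_le_abs_martingaleTransform [IsProbabilityMeasure P]
    (hD : IsIndepNoise P 𝓖 D v) (hv : ∀ j, 0 < v j) (he : ∀ j, Measurable[𝓖 j] (e j))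
    (hδ : 0 ≤ δ) (hε : 0 < ε) (n : ℕ) :
    P.real {ω | ε ≤ |martingaleTransform e D n ω|} ≤
      P.real {ω | δ < predictableVariation e v n ω} + δ / ε ^ 2 := by
  have hsub : {ω | ε ≤ |martingaleTransform e D n ω|} ⊆
      {ω | δ < predictableVariation e v n ω} ∪
        {ω | ε ≤ |martingaleTransform (cutoff e v δ) D n ω|} := by
    intro ω hω
    refine (lt_or_ge δ (predictableVariation e v n ω)).imp id fun hle => ?_
    rwa [mem_ofPred_eq, martingaleTransform_cutoff (fun j => (hv j).le) hle]
  exact (measureReal_mono hsub).trans ((measureReal_union_le _ _).trans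
    (by gcongr; exact hD.measureReal_le_abs_martingaleTransform_cutoff hv he hδ hε n))

end IsIndepNoise

end Transform

/-! ### Increments of the Wiener process -/

/-- The filtration `F` observed at the times `s 0 ≤ s 1 ≤ ⋯` only. -/
def sampledFiltration (F : Filtration ℝ mΩ) {s : ℕ → ℝ} (hs : Monotone s) : Filtration ℕ mΩ where
  seq n := F (s n)
  mono' _ _ hmn := F.mono (hs hmn)
  le' n := F.le (s n)

namespace IsWienerProcess

variable {P : Measure Ω} {F : Filtration ℝ mΩ} {W : ℝ → Ω → ℝ}

lemma measurable_sub (hW : IsWienerProcess P F W) {s t : ℝ} (hst : s ≤ t) :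
    Measurable[F t] fun ω => W t ω - W s ω :=
  (hW.2.2.1 t).sub ((hW.2.2.1 s).mono (F.mono hst) le_rfl)

lemma hasLaw_sub (hW : IsWienerProcess P F W) {s t : ℝ} (hs : 0 ≤ s) (hst : s ≤ t) :
    HasLaw (fun ω => W t ω - W s ω) (gaussianReal 0 (t - s).toNNReal) P where
  aemeasurable := ((hW.measurable_sub hst).mono (F.le t) le_rfl).aemeasurable
  map_eq := (hW.2.2.2 s t hs hst).2

lemma memLp_two_sub (hW : IsWienerProcess P F W) {s t : ℝ} (hs : 0 ≤ s) (hst : s ≤ t) :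
    MemLp (fun ω => W t ω - W s ω) 2 P := by
  have hlaw := hW.hasLaw_sub hs hst
  have hid := memLp_id_gaussianReal' (μ := 0) (v := (t - s).toNNReal) 2 (by simp)
  rw [← hlaw.map_eq] at hid
  exact hid.comp_of_map hlaw.aemeasurable

lemma integral_sub (hW : IsWienerProcess P F W) {s t : ℝ} (hs : 0 ≤ s) (hst : s ≤ t) :
    ∫ ω, (W t ω - W s ω) ∂P = 0 :=
  (hW.hasLaw_sub hs hst).integral_eq.trans integral_id_gaussianReal

lemma integral_sub_sq (hW : IsWienerProcess P F W) {s t : ℝ} (hs : 0 ≤ s) (hst : s ≤ t) :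
    ∫ ω, (W t ω - W s ω) ^ 2 ∂P = t - s := by
  have hlaw := hW.hasLaw_sub hs hst
  rw [← variance_of_integral_eq_zero hlaw.aemeasurable (hW.integral_sub hs hst),
    hlaw.variance_eq, variance_id_gaussianReal, Real.coe_toNNReal _ (sub_nonneg.2 hst)]

theorem isIndepNoise (hW : IsWienerProcess P F W) {s : ℕ → ℝ} (hs : Monotone s) (hs0 : 0 ≤ s 0) :
    IsIndepNoise P (sampledFiltration F hs) (fun j ω => W (s (j + 1)) ω - W (s j) ω)
      fun j => s (j + 1) - s j := by
  have hnonneg : ∀ j, 0 ≤ s j := fun j => hs0.trans (hs j.zero_le)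
  have hstep : ∀ j, s j ≤ s (j + 1) := fun j => hs j.le_succ
  exact
    { measurable := fun j => hW.measurable_sub (hstep j)
      memLp_two := fun j => hW.memLp_two_sub (hnonneg j) (hstep j)
      integral_eq_zero := fun j => hW.integral_sub (hnonneg j) (hstep j)
      integral_sq := fun j => hW.integral_sub_sq (hnonneg j) (hstep j)
      indep := fun j => (hW.2.2.2 _ _ (hnonneg j) (hstep j)).1 }

end IsWienerProcess


/-! ### Simple processes on refined grids -/

lemma exists_strictMono_subset_range {α : Type*} [LinearOrder α] [NoMaxOrder α] (S : Finset α) :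
    ∀ a : α, (∀ x ∈ S, a ≤ x) → ∃ s : ℕ → α, StrictMono s ∧ s 0 = a ∧ ↑S ⊆ range s := by
  induction S using Finset.induction_on_min with
  | empty =>
    intro a _
    obtain ⟨s, hs, hs0⟩ := Nat.exists_strictMono' a
    exact ⟨s, hs, hs0, by simp⟩
  | insert c S hc ih =>
    intro a ha
    obtain ⟨s, hs, hs0, hS⟩ := ih c fun x hx => (hc x hx).le
    have hcS : ↑(insert c S) ⊆ range s := by
      rw [Finset.coe_insert]
      exact insert_subset ⟨0, hs0⟩ hS
    rcases (ha c (Finset.mem_insert_self c S)).eq_or_lt with rfl | hac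
    · exact ⟨s, hs, hs0, hcS⟩
    · refine ⟨fun j => Nat.casesOn j a s, strictMono_nat_of_lt_succ fun j => ?_, rfl, ?_⟩
      · cases j with
        | zero => exact hac.trans_eq hs0.symm
        | succ j => exact hs j.lt_succ_self
      · refine hcS.trans ?_
        rintro _ ⟨j, rfl⟩
        exact ⟨j + 1, rfl⟩

lemma sum_indicator_Ioc_eq {t c : ℕ → ℝ} {n i : ℕ} {x : ℝ} (ht : MonotoneOn t (Iic n))
    (hi : i < n) (hx : x ∈ Ioc (t i) (t (i + 1))) :
    ∑ j ∈ Finset.range n, (Ioc (t j) (t (j + 1))).indicator (fun _ => c j) x = c i := by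
  rw [Finset.sum_eq_single_of_mem i (Finset.mem_range.2 hi), indicator_of_mem hx]
  intro j hj hji
  refine indicator_of_notMem (fun hxj => ?_) _
  have hjn : j < n := Finset.mem_range.1 hj
  rcases hji.lt_or_gt with hlt | hlt
  · exact (hxj.2.trans (ht hjn hi.le hlt)).not_gt hx.1
  · exact (hx.2.trans (ht hi hjn.le hlt)).not_gt hxj.1

/-- The grid `s 0 < s 1 < ⋯`, read up to `s N`, refines the grid `t 0, …, t n` and may extend
beyond its last point. -/
structure IsGridRefinement (s : ℕ → ℝ) (N : ℕ) (t : ℕ → ℝ) (n : ℕ) : Prop where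
  strictMono : StrictMono s
  zero_eq : s 0 = t 0
  mem_range : ∀ i ≤ n, t i ∈ range s
  le_last : t n ≤ s N

namespace IsGridRefinement

variable {s t : ℕ → ℝ} {N n : ℕ}

lemma le_of_lt_succ (hr : IsGridRefinement s N t n) {i j : ℕ} (hi : i ≤ n)
    (hij : t i < s (j + 1)) : t i ≤ s j := by
  obtain ⟨p, hp⟩ := hr.mem_range i hi
  rw [← hp, hr.strictMono.lt_iff_lt] at hij
  rw [← hp]
  exact hr.strictMono.monotone (Nat.lt_succ_iff.1 hij)

lemma cell_subset_or_le (hr : IsGridRefinement s N t n) (j : ℕ) :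
    (∃ i < n, t i ≤ s j ∧ s (j + 1) ≤ t (i + 1)) ∨ t n ≤ s j := by
  rcases le_or_gt (s (j + 1)) (t n) with hle | hlt
  · have h0 : t 0 < s (j + 1) := hr.zero_eq ▸ hr.strictMono j.succ_pos
    obtain ⟨i, hi, hij⟩ := mem_iUnion₂.1 (Ioc_subset_biUnion_Ioc n t ⟨h0, hle⟩)
    have hin : i < n := by simpa using hi
    exact .inl ⟨i, hin, hr.le_of_lt_succ hin.le hij.1, hij.2⟩
  · exact .inr (hr.le_of_lt_succ le_rfl hlt)

end IsGridRefinement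

namespace IsSimpleWith

variable {F : Filtration ℝ mΩ} {b b' : ℝ → Ω → ℝ} {n n' N : ℕ} {t t' s : ℕ → ℝ}

lemma monotoneOn (h : IsSimpleWith F b n t) : MonotoneOn t (Iic n) :=
  monotoneOn_of_le_succ ordConnected_Iic fun i _ _ hi => (h.2.1 i (Nat.lt_of_succ_le hi)).le

lemma nonneg (h : IsSimpleWith F b n t) {i : ℕ} (hi : i ≤ n) : 0 ≤ t i :=
  h.1 ▸ h.monotoneOn (mem_Iic.2 n.zero_le) hi i.zero_le

lemma apply_of_mem_Ioc (h : IsSimpleWith F b n t) {i : ℕ} (hi : i < n) {x : ℝ}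
    (hx : x ∈ Ioc (t i) (t (i + 1))) (ω : Ω) : b x ω = b (t (i + 1)) ω := by
  have hx0 : x ∉ ({0} : Set ℝ) := ((h.nonneg hi.le).trans_lt hx.1).ne'
  rw [h.2.2.2.2 x ω, indicator_of_notMem hx0, zero_add]
  exact sum_indicator_Ioc_eq (c := fun i => b (t (i + 1)) ω) h.monotoneOn hi hx

lemma apply_of_notMem_Icc (h : IsSimpleWith F b n t) {x : ℝ} (hx : x ∉ Icc 0 (t n)) (ω : Ω) :
    b x ω = 0 := by
  have hx0 : x ∉ ({0} : Set ℝ) := fun hx' =>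
    hx (by rw [mem_singleton_iff.1 hx']; exact ⟨le_rfl, h.nonneg le_rfl⟩)
  rw [h.2.2.2.2 x ω, indicator_of_notMem hx0, zero_add]
  refine Finset.sum_eq_zero fun i hi => indicator_of_notMem (fun hxi => hx ?_) _
  have hin : i < n := Finset.mem_range.1 hi
  exact ⟨(h.nonneg hin.le).trans hxi.1.le, hxi.2.trans (h.monotoneOn hin (mem_Iic.2 le_rfl) hin)⟩

lemma of_eqOn_cells (hs : StrictMono s) (hs0 : s 0 = 0) (hb0 : Measurable[F 0] (b 0))
    (hmeas : ∀ j < N, Measurable[F (s j)] (b (s (j + 1))))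
    (hcell : ∀ j < N, ∀ x ∈ Ioc (s j) (s (j + 1)), b x = b (s (j + 1)))
    (hzero : ∀ x ∉ Icc 0 (s N), b x = 0) : IsSimpleWith F b N s := by
  refine ⟨hs0, fun j _ => hs j.lt_succ_self, hb0, hmeas, fun x ω => ?_⟩
  have hcut : ∀ x ∉ Ioc (s 0) (s N), ∑ j ∈ Finset.range N,
      (Ioc (s j) (s (j + 1))).indicator (fun _ => b (s (j + 1)) ω) x = 0 := fun x hx =>
    Finset.sum_eq_zero fun j hj => indicator_of_notMem (fun hxj => hx
      ⟨(hs.monotone j.zero_le).trans_lt hxj.1,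
        hxj.2.trans (hs.monotone (Finset.mem_range.1 hj))⟩) _
  by_cases hx0 : x = 0
  · rw [hcut x fun hx => (hx0.trans hs0.symm).not_gt hx.1]
    simp [hx0]
  rw [indicator_of_notMem (s := {0}) hx0, zero_add]
  by_cases hx : x ∈ Ioc (s 0) (s N)
  · obtain ⟨j, hj, hxj⟩ := mem_iUnion₂.1 (Ioc_subset_biUnion_Ioc N s hx)
    have hjN : j < N := by simpa using hj
    rw [sum_indicator_Ioc_eq (c := fun j => b (s (j + 1)) ω) (hs.monotone.monotoneOn _) hjN hxj,
      hcell j hjN x hxj]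
  · rw [hcut x hx, hzero x fun hx' => hx ⟨hs0 ▸ hx'.1.lt_of_ne' hx0, hx'.2⟩, Pi.zero_apply]

lemma apply_eq_of_mem_cell (h : IsSimpleWith F b n t) (hr : IsGridRefinement s N t n) {j : ℕ}
    {x : ℝ} (hx : x ∈ Ioc (s j) (s (j + 1))) : b x = b (s (j + 1)) := by
  ext ω
  have hlt : s j < s (j + 1) := hr.strictMono j.lt_succ_self
  obtain ⟨i, hi, hij, hji⟩ | hj := hr.cell_subset_or_le j
  · rw [h.apply_of_mem_Ioc hi ⟨hij.trans_lt hx.1, hx.2.trans hji⟩,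
      h.apply_of_mem_Ioc hi ⟨hij.trans_lt hlt, hji⟩]
  · rw [h.apply_of_notMem_Icc fun hx' => (hj.trans_lt hx.1).not_ge hx'.2,
      h.apply_of_notMem_Icc fun hx' => (hj.trans_lt hlt).not_ge hx'.2]

lemma measurable_apply_refinement (h : IsSimpleWith F b n t) (hr : IsGridRefinement s N t n)
    (j : ℕ) : Measurable[F (s j)] (b (s (j + 1))) := by
  have hlt : s j < s (j + 1) := hr.strictMono j.lt_succ_self
  obtain ⟨i, hi, hij, hji⟩ | hj := hr.cell_subset_or_le j
  · rw [funext (h.apply_of_mem_Ioc hi ⟨hij.trans_lt hlt, hji⟩)]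
    exact (h.2.2.2.1 i hi).mono (F.mono hij) le_rfl
  · rw [funext (h.apply_of_notMem_Icc fun hx => (hj.trans_lt hlt).not_ge hx.2)]
    exact measurable_const

theorem refine (h : IsSimpleWith F b n t) (hr : IsGridRefinement s N t n) :
    IsSimpleWith F b N s :=
  of_eqOn_cells hr.strictMono (hr.zero_eq.trans h.1) h.2.2.1
    (fun j _ => h.measurable_apply_refinement hr j)
    (fun _ _ _ hx => h.apply_eq_of_mem_cell hr hx)
    fun _ hx => funext (h.apply_of_notMem_Icc fun hx' => hx ⟨hx'.1, hx'.2.trans hr.le_last⟩)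

lemma elemInt_eq_of_grid_eq (h : IsSimpleWith F b n t) (hr : IsGridRefinement s N t n)
    (W : ℝ → Ω → ℝ) (ω : Ω) :
    ∀ k ≤ n, ∀ q, s q = t k → ElemInt W b k t ω = ElemInt W b q s ω := by
  intro k
  induction k with
  | zero =>
    intro _ q hq
    rw [hr.strictMono.injective (hq.trans hr.zero_eq.symm)]
    rfl
  | succ k ih =>
    intro hk q hq
    have hkn : k < n := hk
    obtain ⟨p, hp⟩ := hr.mem_range k hkn.le
    have hpq : p ≤ q := (hr.strictMono.lt_iff_lt.1 (by rw [hp, hq]; exact h.2.1 k hkn)).le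
    have hcell : ∀ j ∈ Finset.Ico p q, b (s (j + 1)) ω = b (t (k + 1)) ω := fun j hj =>
      have hj' := Finset.mem_Ico.1 hj
      h.apply_of_mem_Ioc hkn ⟨hp ▸ hr.strictMono (Nat.lt_succ_of_le hj'.1),
        hq ▸ hr.strictMono.monotone hj'.2⟩ ω
    calc ElemInt W b (k + 1) t ω
        = ElemInt W b k t ω + b (t (k + 1)) ω * (W (s q) ω - W (s p) ω) := by
          rw [ElemInt, Finset.sum_range_succ, hp, hq, ElemInt]
      _ = ElemInt W b p s ω
            + ∑ j ∈ Finset.Ico p q, b (s (j + 1)) ω * (W (s (j + 1)) ω - W (s j) ω) := by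
          rw [ih hkn.le p hp, ← Finset.sum_Ico_sub (fun j => W (s j) ω) hpq, Finset.mul_sum]
          exact congrArg _ (Finset.sum_congr rfl fun j hj => by rw [hcell j hj])
      _ = ElemInt W b q s ω := Finset.sum_range_add_sum_Ico _ hpq

theorem elemInt_refine (h : IsSimpleWith F b n t) (hr : IsGridRefinement s N t n)
    (W : ℝ → Ω → ℝ) (ω : Ω) : ElemInt W b n t ω = ElemInt W b N s ω := by
  obtain ⟨q, hq⟩ := hr.mem_range n le_rfl
  have hqN : q ≤ N := hr.strictMono.le_iff_le.1 (hq ▸ hr.le_last)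
  have htail :
      ∑ j ∈ Finset.Ico q N, b (s (j + 1)) ω * (W (s (j + 1)) ω - W (s j) ω) = 0 := by
    refine Finset.sum_eq_zero fun j hj => ?_
    have hlt : t n < s (j + 1) :=
      hq ▸ hr.strictMono (Nat.lt_succ_of_le (Finset.mem_Ico.1 hj).1)
    rw [h.apply_of_notMem_Icc fun hx => hlt.not_ge hx.2, zero_mul]
  rw [h.elemInt_eq_of_grid_eq hr W ω n le_rfl q hq, ElemInt, ElemInt,
    ← Finset.sum_range_add_sum_Ico _ hqN, htail, add_zero]

lemma exists_common_refinement (h : IsSimpleWith F b n t) (h' : IsSimpleWith F b' n' t') :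
    ∃ N s, IsGridRefinement s N t n ∧ IsGridRefinement s N t' n' ∧ s N = max (t n) (t' n') := by
  set S : Finset ℝ :=
    (Finset.range (n + 1)).image t ∪ (Finset.range (n' + 1)).image t' with hS
  have ht : ∀ i ≤ n, t i ∈ S := fun i hi => Finset.mem_union_left _
    (Finset.mem_image_of_mem t (Finset.mem_range_succ_iff.2 hi))
  have ht' : ∀ i ≤ n', t' i ∈ S := fun i hi => Finset.mem_union_right _
    (Finset.mem_image_of_mem t' (Finset.mem_range_succ_iff.2 hi))
  have hnonneg : ∀ x ∈ S, 0 ≤ x := by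
    intro x hx
    simp only [hS, Finset.mem_union, Finset.mem_image, Finset.mem_range_succ_iff] at hx
    obtain ⟨i, hi, rfl⟩ | ⟨i, hi, rfl⟩ := hx
    exacts [h.nonneg hi, h'.nonneg hi]
  obtain ⟨s, hs, hs0, hSs⟩ := exists_strictMono_subset_range S 0 hnonneg
  obtain ⟨N, hN⟩ : max (t n) (t' n') ∈ range s :=
    hSs (max_rec' (· ∈ (S : Set ℝ)) (ht n le_rfl) (ht' n' le_rfl))
  exact ⟨N, s, ⟨hs, hs0.trans h.1.symm, fun i hi => hSs (ht i hi), hN ▸ le_max_left _ _⟩,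
    ⟨hs, hs0.trans h'.1.symm, fun i hi => hSs (ht' i hi), hN ▸ le_max_right _ _⟩, hN⟩

lemma sub (h : IsSimpleWith F b N s) (h' : IsSimpleWith F b' N s) :
    IsSimpleWith F (fun x ω => b x ω - b' x ω) N s := by
  refine ⟨h.1, h.2.1, h.2.2.1.sub h'.2.2.1, fun j hj => (h.2.2.2.1 j hj).sub (h'.2.2.2.1 j hj),
    fun x ω => ?_⟩
  change b x ω - b' x ω = _
  rw [h.2.2.2.2 x ω, h'.2.2.2.2 x ω, add_sub_add_comm, ← Finset.sum_sub_distrib]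
  simp only [indicator_sub]

theorem exists_sub (h : IsSimpleWith F b n t) (h' : IsSimpleWith F b' n' t') :
    ∃ N s, IsSimpleWith F (fun x ω => b x ω - b' x ω) N s ∧ s N = max (t n) (t' n') ∧
      ∀ W ω, ElemInt W (fun x ω => b x ω - b' x ω) N s ω
        = ElemInt W b n t ω - ElemInt W b' n' t' ω := by
  obtain ⟨N, s, hr, hr', hN⟩ := h.exists_common_refinement h'
  refine ⟨N, s, (h.refine hr).sub (h'.refine hr'), hN, fun W ω => ?_⟩
  rw [h.elemInt_refine hr, h'.elemInt_refine hr']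
  simp only [ElemInt, sub_mul, Finset.sum_sub_distrib]

/-! ### Sample paths and the tail bound -/

lemma memLp_path (h : IsSimpleWith F b n t) (μ : Measure ℝ) [IsFiniteMeasure μ] (p : ENNReal)
    (ω : Ω) : MemLp (fun x => b x ω) p μ := by
  have hzero : MemLp (indicator {0} fun _ => b 0 ω) p μ :=
    (memLp_const _).indicator (measurableSet_singleton 0)
  have hcells : MemLp (fun x => ∑ i ∈ Finset.range n,
      (Ioc (t i) (t (i + 1))).indicator (fun _ => b (t (i + 1)) ω) x) p μ :=
    memLp_finsetSum _ fun i _ => (memLp_const _).indicator measurableSet_Ioc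
  exact (hzero.add hcells).ae_eq (ae_of_all _ fun x => (h.2.2.2.2 x ω).symm)

lemma setIntegral_sq_eq (h : IsSimpleWith F b n t) {u : ℝ} (hu : t n ≤ u) (ω : Ω) :
    ∫ x in Ioc 0 u, b x ω ^ 2
      = ∑ i ∈ Finset.range n, b (t (i + 1)) ω ^ 2 * (t (i + 1) - t i) := by
  have hle : ∀ i < n, t i ≤ t (i + 1) := fun i hi => (h.2.1 i hi).le
  have hint : ∀ x y : ℝ, IntervalIntegrable (fun x => b x ω ^ 2) volume x y := fun x y =>
    ⟨(h.memLp_path _ 2 ω).integrable_sq, (h.memLp_path _ 2 ω).integrable_sq⟩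
  calc ∫ x in Ioc 0 u, b x ω ^ 2
      = ∫ x in Ioc (t 0) (t n), b x ω ^ 2 := by
        rw [h.1]
        refine setIntegral_eq_of_subset_of_forall_sdiff_eq_zero measurableSet_Ioc
          (Ioc_subset_Ioc_right hu) fun x hx => ?_
        rw [h.apply_of_notMem_Icc fun hx' => hx.2 ⟨hx.1.1, hx'.2⟩, zero_pow two_ne_zero]
    _ = ∑ i ∈ Finset.range n, ∫ x in t i..t (i + 1), b x ω ^ 2 := by
        rw [intervalIntegral.sum_integral_adjacent_intervals fun i _ => hint _ _,
          intervalIntegral.integral_of_le (h.1.trans_le (h.nonneg le_rfl))]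
    _ = ∑ i ∈ Finset.range n, b (t (i + 1)) ω ^ 2 * (t (i + 1) - t i) := by
        refine Finset.sum_congr rfl fun i hi => ?_
        have hin : i < n := Finset.mem_range.1 hi
        rw [intervalIntegral.integral_of_le (hle i hin), setIntegral_congr_fun measurableSet_Ioc
          (g := fun _ => b (t (i + 1)) ω ^ 2) fun x hx => by
            simp only [h.apply_of_mem_Ioc hin hx ω], setIntegral_const,
          Real.volume_real_Ioc_of_le (hle i hin), smul_eq_mul, mul_comm]

theorem measureReal_le_abs_elemInt {P : Measure Ω} [IsProbabilityMeasure P] {W : ℝ → Ω → ℝ}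
    (hW : IsWienerProcess P F W) (h : IsSimpleWith F b n t) {u δ ε : ℝ} (hu : t n ≤ u)
    (hδ : 0 ≤ δ) (hε : 0 < ε) :
    P.real {ω | ε ≤ |ElemInt W b n t ω|}
      ≤ P.real {ω | δ < ∫ x in Ioc 0 u, b x ω ^ 2} + δ / ε ^ 2 := by
  obtain ⟨N, s, hr, -, hN⟩ := h.exists_common_refinement h
  have hs0 : s 0 = 0 := hr.zero_eq.trans h.1
  have hNu : s N ≤ u := hN.trans_le (max_le hu hu)
  simp only [h.elemInt_refine hr, (h.refine hr).setIntegral_sq_eq hNu]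
  exact (hW.isIndepNoise hr.strictMono.monotone hs0.ge).measureReal_le_abs_martingaleTransform
    (fun j => sub_pos.2 (hr.strictMono j.lt_succ_self)) (h.measurable_apply_refinement hr) hδ hε N

end IsSimpleWith

/-! ### Convergence in probability -/

lemma tendstoInMeasure_of_dist_le {ι α E E₁ E₂ : Type*} {mα : MeasurableSpace α}
    [PseudoMetricSpace E] [PseudoMetricSpace E₁] [PseudoMetricSpace E₂] {μ : Measure α}
    {l : Filter ι} {f : ι → α → E} {g : α → E} {f₁ : ι → α → E₁} {g₁ : α → E₁} {f₂ : ι → α → E₂}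
    {g₂ : α → E₂} {C : ℝ} (hC : 0 < C) (h₁ : TendstoInMeasure μ f₁ l g₁)
    (h₂ : TendstoInMeasure μ f₂ l g₂) (hle : ∀ k, ∀ᵐ x ∂μ,
      dist (f k x) (g x) ≤ C * (dist (f₁ k x) (g₁ x) + dist (f₂ k x) (g₂ x))) :
    TendstoInMeasure μ f l g := by
  rw [tendstoInMeasure_iff_dist] at h₁ h₂ ⊢
  intro ε hε
  set ε' : ℝ := ε / C / 2 with hε'
  have hε'pos : 0 < ε' := by positivity
  refine tendsto_of_tendsto_of_tendsto_of_le_of_le tendsto_const_nhds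
    (by simpa only [add_zero] using (h₁ ε' hε'pos).add (h₂ ε' hε'pos)) (fun _ => zero_le)
    fun k => (measure_mono_ae ?_).trans (measure_union_le _ _)
  filter_upwards [hle k] with x hx hεx
  by_contra! hlt
  have h₁x : dist (f₁ k x) (g₁ x) < ε' := not_le.1 fun h => hlt (.inl h)
  have h₂x : dist (f₂ k x) (g₂ x) < ε' := not_le.1 fun h => hlt (.inr h)
  refine (hx.trans_lt ?_).not_ge hεx
  calc C * (dist (f₁ k x) (g₁ x) + dist (f₂ k x) (g₂ x)) < C * (ε' + ε') := by gcongr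
    _ = ε := by rw [hε', add_halves, mul_div_cancel₀ _ hC.ne']

lemma integral_sub_sq_le {α : Type*} {mα : MeasurableSpace α} {μ : Measure α} {f g : α → ℝ}
    (hf : MemLp f 2 μ) (hg : MemLp g 2 μ) :
    ∫ x, (f x - g x) ^ 2 ∂μ ≤ 2 * (∫ x, f x ^ 2 ∂μ + ∫ x, g x ^ 2 ∂μ) := by
  rw [← integral_add hf.integrable_sq hg.integrable_sq, ← integral_const_mul]
  refine integral_mono (hf.sub hg).integrable_sq
    ((hf.integrable_sq.add hg.integrable_sq).const_mul 2) fun x => ?_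
  simpa only [sub_eq_add_neg, neg_sq] using add_sq_le (a := f x) (b := -g x)

lemma MemL2.ae_memLp_path {P : Measure Ω} {F : Filtration ℝ mΩ} {b : ℝ → Ω → ℝ}
    (hb : MemL2 P F b) {u : ℝ} (hu : 0 ≤ u) :
    ∀ᵐ ω ∂P, MemLp (fun x => b x ω) 2 (volume.restrict (Ioc 0 u)) := by
  filter_upwards [hb.2.2 u hu] with ω hω
  have hpath : Measurable fun x => b x ω := hb.1.comp measurable_prodMk_right
  refine (memLp_two_iff_integrable_sq hpath.aestronglyMeasurable).2
    ⟨(hpath.pow_const 2).aestronglyMeasurable, ?_⟩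
  exact (hasFiniteIntegral_iff_ofReal (ae_of_all _ fun x => sq_nonneg _)).2 hω

section Limit

variable {ι : Type*} {l : Filter ι} {P : Measure Ω} {F : Filtration ℝ mΩ} {W b : ℝ → Ω → ℝ} {u : ℝ}
  {bs cs : ι → ℝ → Ω → ℝ} {m m' : ι → ℕ} {τ τ' : ι → ℕ → ℝ}

theorem tendstoInMeasure_elemInt_zero [IsProbabilityMeasure P] (hW : IsWienerProcess P F W)
    (hbs : ∀ k, IsSimpleWith F (bs k) (m k) (τ k)) (hle : ∀ k, τ k (m k) ≤ u)
    (hsq : TendstoInMeasure P (fun k ω => ∫ x in Ioc 0 u, bs k x ω ^ 2) l fun _ => 0) :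
    TendstoInMeasure P (fun k => ElemInt W (bs k) (m k) (τ k)) l fun _ => 0 := by
  rw [tendstoInMeasure_iff_measureReal_norm] at hsq ⊢
  simp only [sub_zero, Real.norm_eq_abs] at hsq ⊢
  intro ε hε
  refine tendsto_order.2 ⟨fun a ha => .of_forall fun k => ha.trans_le measureReal_nonneg, ?_⟩
  intro η hη
  set δ : ℝ := η / 2 * ε ^ 2
  have hδpos : 0 < δ := by positivity
  filter_upwards [(tendsto_order.1 (hsq δ hδpos)).2 (η / 2) (half_pos hη)] with k hk
  have hsub : {ω | δ < ∫ x in Ioc 0 u, bs k x ω ^ 2} ⊆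
      {ω | δ ≤ |∫ x in Ioc 0 u, bs k x ω ^ 2|} := by
    intro ω hω
    rw [mem_ofPred_eq] at hω ⊢
    exact hω.le.trans (le_abs_self _)
  calc P.real {ω | ε ≤ |ElemInt W (bs k) (m k) (τ k) ω|}
      ≤ P.real {ω | δ < ∫ x in Ioc 0 u, bs k x ω ^ 2} + δ / ε ^ 2 :=
        (hbs k).measureReal_le_abs_elemInt hW (hle k) hδpos.le hε
    _ ≤ P.real {ω | δ ≤ |∫ x in Ioc 0 u, bs k x ω ^ 2|} + η / 2 :=
        add_le_add (measureReal_mono hsub) (mul_div_cancel_right₀ _ (pow_pos hε 2).ne').le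
    _ < η / 2 + η / 2 := by gcongr
    _ = η := add_halves η

lemma tendstoInMeasure_integral_sub_sq
    (hb : ∀ᵐ ω ∂P, MemLp (fun x => b x ω) 2 (volume.restrict (Ioc 0 u)))
    (hbs : ∀ k, IsSimpleWith F (bs k) (m k) (τ k))
    (hcs : ∀ k, IsSimpleWith F (cs k) (m' k) (τ' k))
    (hbbs : TendstoInMeasure P (fun k ω => ∫ x in Ioc 0 u, (b x ω - bs k x ω) ^ 2) l fun _ => 0)
    (hbcs : TendstoInMeasure P (fun k ω => ∫ x in Ioc 0 u, (b x ω - cs k x ω) ^ 2) l fun _ => 0) :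
    TendstoInMeasure P (fun k ω => ∫ x in Ioc 0 u, (bs k x ω - cs k x ω) ^ 2) l fun _ => 0 := by
  refine tendstoInMeasure_of_dist_le two_pos hbcs hbbs fun k => ?_
  filter_upwards [hb] with ω hω
  have hle := integral_sub_sq_le (hω.sub ((hcs k).memLp_path _ 2 ω))
    (hω.sub ((hbs k).memLp_path _ 2 ω))
  simp only [Pi.sub_apply, sub_sub_sub_cancel_left] at hle
  have habs : ∀ f : ℝ → ℝ, |∫ x in Ioc 0 u, f x ^ 2| = ∫ x in Ioc 0 u, f x ^ 2 := fun f =>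
    abs_of_nonneg (integral_nonneg fun x => sq_nonneg (f x))
  simpa only [Real.dist_eq, sub_zero, habs] using hle

theorem elemInt_limit_unique_general [l.NeBot] [l.IsCountablyGenerated] [IsProbabilityMeasure P]
    (hW : IsWienerProcess P F W)
    (hb : ∀ᵐ ω ∂P, MemLp (fun x => b x ω) 2 (volume.restrict (Ioc 0 u)))
    (hbs : ∀ k, IsSimpleWith F (bs k) (m k) (τ k))
    (hcs : ∀ k, IsSimpleWith F (cs k) (m' k) (τ' k))
    (hle : ∀ k, τ k (m k) ≤ u) (hle' : ∀ k, τ' k (m' k) ≤ u)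
    (hbbs : TendstoInMeasure P (fun k ω => ∫ x in Ioc 0 u, (b x ω - bs k x ω) ^ 2) l fun _ => 0)
    (hbcs : TendstoInMeasure P (fun k ω => ∫ x in Ioc 0 u, (b x ω - cs k x ω) ^ 2) l fun _ => 0)
    {X Y : Ω → ℝ} (hX : TendstoInMeasure P (fun k => ElemInt W (bs k) (m k) (τ k)) l X)
    (hY : TendstoInMeasure P (fun k => ElemInt W (cs k) (m' k) (τ' k)) l Y) :
    X =ᵐ[P] Y := by
  choose N s hsub hN hElemInt using fun k => (hbs k).exists_sub (hcs k)
  have hzero := tendstoInMeasure_elemInt_zero hW hsub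
    (fun k => (hN k).trans_le (max_le (hle k) (hle' k)))
    (tendstoInMeasure_integral_sub_sq hb hbs hcs hbbs hbcs)
  have hXY : TendstoInMeasure P
      (fun k => ElemInt W (fun x ω => bs k x ω - cs k x ω) (N k) (s k)) l fun ω => X ω - Y ω := by
    refine tendstoInMeasure_of_dist_le one_pos hX hY fun k => ae_of_all _ fun ω => ?_
    rw [hElemInt, one_mul]
    exact dist_sub_sub_le _ _ _ _
  filter_upwards [tendstoInMeasure_ae_unique hXY hzero] with ω hω
  exact sub_eq_zero.1 hω

end Limit

/-- The probability limit of the elementary stochastic integrals does not depend on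
the approximating sequence of simple `H²` processes. -/
theorem elemInt_limit_unique
    (P : Measure Ω) [IsProbabilityMeasure P] [P.IsComplete]
    (F : Filtration ℝ mΩ) (hF : AugmentedFiltration P F)
    (W : ℝ → Ω → ℝ) (hW : IsWienerProcess P F W)
    (b : ℝ → Ω → ℝ) (hb : MemL2 P F b) (u : ℝ) (hu : 0 ≤ u)
    (bs cs : ℕ → ℝ → Ω → ℝ) (m m' : ℕ → ℕ) (τ τ' : ℕ → ℕ → ℝ)
    (hsimple : ∀ k, IsSimpleWith F (bs k) (m k) (τ k))
    (hsimple' : ∀ k, IsSimpleWith F (cs k) (m' k) (τ' k))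
    (hH2 : ∀ k, MemH2 P F (bs k)) (hH2' : ∀ k, MemH2 P F (cs k))
    (hle : ∀ k, τ k (m k) ≤ u) (hle' : ∀ k, τ' k (m' k) ≤ u)
    (happrox : TendstoInMeasure P
      (fun k ω => ∫ s in Set.Ioc (0 : ℝ) u, (b s ω - bs k s ω) ^ 2) atTop
      (fun _ => (0 : ℝ)))
    (happrox' : TendstoInMeasure P
      (fun k ω => ∫ s in Set.Ioc (0 : ℝ) u, (b s ω - cs k s ω) ^ 2) atTop
      (fun _ => (0 : ℝ)))
    (X Y : Ω → ℝ) (hX : Measurable X) (hY : Measurable Y)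
    (hXlim : TendstoInMeasure P (fun k => ElemInt W (bs k) (m k) (τ k)) atTop X)
    (hYlim : TendstoInMeasure P (fun k => ElemInt W (cs k) (m' k) (τ' k)) atTop Y) :
    ∀ᵐ ω ∂P, X ω = Y ω :=
  elemInt_limit_unique_general hW (hb.ae_memLp_path hu) hsimple hsimple' hle hle' happrox happrox'
    hXlim hYlim
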